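/- Let k ≥ 1, δ ≥ 2, n ≥ (δ² + kδ + 7δ + 6k + 9)(δ² + kδ + 1), and let G ∈ 𝓑₂(n,k,δ) be a graph attaining the maximum Q-index among all graphs in 𝓑₂(n,k,δ), and, subject to that, such that the induced subgraph G[Y] has the largest number of edges. Let h be a positive eigenvector of Q(G) for q(G) with maximum entry 1. Set Y₂ = {i ∈ Y : d_G(i) ≤ n−2} and Z₁ = {i ∈ Z : d_G(i) = n−δ−k−1}. If Y₂ ≠ ∅, then h_i > h_j for all i ∈ Z₁ and all j ∈ Y₂. -/

import Mathlib

/-!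
If `h i ≤ h j` for some `i ∈ Z₁` and `j ∈ Y₂`, rotate an edge: `j` misses some vertex `w` of
`Y ∪ Z`, while `i` is adjacent to all of `Y ∪ Z`, so the edge `iw` can be replaced by `jw` without
leaving the family. The rotation changes the quadratic form of `Q` at `h` by
`(h j + h w)² - (h i + h w)² ≥ 0`, so by Rayleigh's principle the Q-index does not decrease. It
cannot stay the same either, since then `h` would be an eigenvector of both graphs for the same
eigenvalue, although the `j`-th entry of `Q h` has grown by `h j + h w`. This contradicts the
maximality of the Q-index.
-/

open Finset Matrix

/-- The signless Laplacian matrix `Q(G) = D(G) + A(G)` of a graph. -/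
noncomputable def signlessLaplacian {V : Type*} [Fintype V] [DecidableEq V]
    (G : SimpleGraph V) [DecidableRel G.Adj] : Matrix V V ℝ :=
  Matrix.diagonal (fun v => (G.degree v : ℝ)) + G.adjMatrix ℝ

/-- The Q-index (largest eigenvalue of the signless Laplacian). -/
noncomputable def qIndex {V : Type*} [Fintype V] [DecidableEq V]
    (G : SimpleGraph V) [DecidableRel G.Adj] : ℝ :=
  sSup {μ : ℝ | ∃ x : V → ℝ, x ≠ 0 ∧ signlessLaplacian G *ᵥ x = μ • x}

/-- The adjacency spectral radius (largest eigenvalue of the adjacency matrix). -/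
noncomputable def adjSpecRad {V : Type*} [Fintype V] [DecidableEq V]
    (G : SimpleGraph V) [DecidableRel G.Adj] : ℝ :=
  sSup {μ : ℝ | ∃ x : V → ℝ, x ≠ 0 ∧ G.adjMatrix ℝ *ᵥ x = μ • x}

/-- A graph is `k`-path-coverable if its vertex set can be covered by at most `k`
vertex-disjoint paths. -/
def PathCoverable {V : Type*} (G : SimpleGraph V) (k : ℕ) : Prop :=
  ∃ (m : ℕ) (P : Fin m → Σ (u : V) (v : V), G.Walk u v),
    m ≤ k ∧
    (∀ i, (P i).2.2.IsPath) ∧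
    (∀ v : V, ∃ i, v ∈ (P i).2.2.support) ∧
    (∀ i j, i ≠ j → ∀ v, v ∈ (P i).2.2.support → v ∉ (P j).2.2.support)

/-- A graph is traceable if it has a Hamilton path. -/
def Traceable {V : Type*} (G : SimpleGraph V) : Prop :=
  ∃ (u v : V) (p : G.Walk u v), p.IsPath ∧ ∀ w, w ∈ p.support

/-- `B(n,k,δ) = K_δ ∨ (K_{n-2δ-k} ∪ complement K_{δ+k})`: the first `δ` vertices form the
dominating clique `Y`, the next `n-2δ-k` vertices form the clique `Z`, and the
last `δ+k` vertices form the independent set `X`. -/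
def Bgraph (n k δ : ℕ) : SimpleGraph (Fin n) where
  Adj i j := i ≠ j ∧ ((i : ℕ) < δ ∨ (j : ℕ) < δ ∨
      ((i : ℕ) < n - (δ + k) ∧ (j : ℕ) < n - (δ + k)))
  symm := by
    constructor
    rintro i j ⟨hne, h⟩
    exact ⟨hne.symm, by tauto⟩
  loopless := by
    constructor
    rintro i ⟨h, -⟩
    exact h rfl

instance (n k δ : ℕ) : DecidableRel (Bgraph n k δ).Adj := fun i j =>
  inferInstanceAs (Decidable (i ≠ j ∧ ((i : ℕ) < δ ∨ (j : ℕ) < δ ∨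
      ((i : ℕ) < n - (δ + k) ∧ (j : ℕ) < n - (δ + k)))))

instance {n : ℕ} (G : SimpleGraph (Fin n)) [DecidableRel G.Adj]
    (E' : Finset (Sym2 (Fin n))) : DecidableRel (G.deleteEdges ↑E').Adj := fun a b =>
  decidable_of_iff (G.Adj a b ∧ s(a, b) ∉ E') (by simp)

/-- The edge set `E₁` of `B(n,k,δ)`: edges with both endpoints in `Y ∪ Z`. -/
def IsE1Edge (n k δ : ℕ) (e : Sym2 (Fin n)) : Prop :=
  e ∈ (Bgraph n k δ).edgeSet ∧ ∀ v ∈ e, (v : ℕ) < n - (δ + k)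

/-- The family `𝓑₁(n,k,δ)`, up to isomorphism. -/
def InB1 (n k δ : ℕ) (G : SimpleGraph (Fin n)) : Prop :=
  ∃ E' : Finset (Sym2 (Fin n)),
    (∀ e ∈ E', IsE1Edge n k δ e) ∧ E'.card ≤ δ * (δ + k) / 4 ∧
    Nonempty (G ≃g (Bgraph n k δ).deleteEdges ↑E')

/-- The family `𝓑₂(n,k,δ)`, up to isomorphism. -/
def InB2 (n k δ : ℕ) (G : SimpleGraph (Fin n)) : Prop :=
  ∃ E' : Finset (Sym2 (Fin n)),
    (∀ e ∈ E', IsE1Edge n k δ e) ∧ E'.card = δ * (δ + k) / 4 + 1 ∧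
    Nonempty (G ≃g (Bgraph n k δ).deleteEdges ↑E')
/-- The number of edges of the subgraph of `G` induced by `Y` (the first `δ` vertices). -/
def inducedYEdges (n δ : ℕ) (G : SimpleGraph (Fin n)) [DecidableRel G.Adj] : ℕ :=
  (G.edgeFinset.filter (fun e => ∀ v : Fin n, v ∈ e → (v : ℕ) < δ)).card


section Rayleigh

variable {V : Type*} [Fintype V] [DecidableEq V] {A : Matrix V V ℝ}

lemma mem_spectrum_iff_exists_mulVec_eq_smul {K : Type*} [Field K] (A : Matrix V V K) (μ : K) :
    μ ∈ spectrum K A ↔ ∃ x : V → K, x ≠ 0 ∧ A *ᵥ x = μ • x := by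
  rw [← Matrix.spectrum_toLin', ← Module.End.hasEigenvalue_iff_mem_spectrum,
    Module.End.hasEigenvalue_iff, Submodule.ne_bot_iff]
  simp only [Module.End.mem_eigenspace_iff, Matrix.toLin'_apply, and_comm]

open scoped MatrixOrder in
lemma posSemidef_sSup_spectrum_smul_one_sub (hA : A.IsHermitian) :
    (sSup (spectrum ℝ A) • (1 : Matrix V V ℝ) - A).PosSemidef := by
  rw [← Matrix.le_iff, ← Algebra.algebraMap_eq_smul_one]
  exact le_algebraMap_of_spectrum_le (fun μ hμ ↦ le_csSup A.finite_spectrum.bddAbove hμ) hA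

lemma dotProduct_smul_one_sub_mulVec {R : Type*} [CommRing R] (A : Matrix V V R) (c : R)
    (x : V → R) :
    x ⬝ᵥ (c • (1 : Matrix V V R) - A) *ᵥ x = c * (x ⬝ᵥ x) - x ⬝ᵥ A *ᵥ x := by
  simp only [sub_mulVec, smul_mulVec, one_mulVec, dotProduct_sub, dotProduct_smul, smul_eq_mul]

lemma dotProduct_mulVec_le_sSup_spectrum_mul (hA : A.IsHermitian) (x : V → ℝ) :
    x ⬝ᵥ A *ᵥ x ≤ sSup (spectrum ℝ A) * (x ⬝ᵥ x) := by
  have hnonneg := (posSemidef_sSup_spectrum_smul_one_sub hA).dotProduct_mulVec_nonneg x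
  rwa [star_trivial, dotProduct_smul_one_sub_mulVec, sub_nonneg] at hnonneg

lemma mulVec_eq_sSup_spectrum_smul_of_dotProduct_eq (hA : A.IsHermitian) {x : V → ℝ}
    (hx : x ⬝ᵥ A *ᵥ x = sSup (spectrum ℝ A) * (x ⬝ᵥ x)) :
    A *ᵥ x = sSup (spectrum ℝ A) • x := by
  have hzero := (posSemidef_sSup_spectrum_smul_one_sub hA).dotProduct_mulVec_zero_iff x
  rw [star_trivial, dotProduct_smul_one_sub_mulVec, sub_mulVec, smul_mulVec, one_mulVec,
    sub_eq_zero, sub_eq_zero] at hzero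
  exact (hzero.1 hx.symm).symm

lemma lt_sSup_spectrum_of_mul_dotProduct_le (hA : A.IsHermitian) {x : V → ℝ} {q : ℝ}
    (hle : q * (x ⬝ᵥ x) ≤ x ⬝ᵥ A *ᵥ x) (hne : A *ᵥ x ≠ q • x) : q < sSup (spectrum ℝ A) := by
  by_contra! hq
  have hx : 0 < x ⬝ᵥ x := by
    refine dotProduct_self_star_pos_iff.2 fun h0 ↦ hne ?_
    simp only [h0, mulVec_zero, smul_zero]
  have hupper := dotProduct_mulVec_le_sSup_spectrum_mul hA x
  have hq_eq : q = sSup (spectrum ℝ A) :=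
    hq.antisymm' (le_of_mul_le_mul_right (hle.trans hupper) hx)
  subst hq_eq
  exact hne (mulVec_eq_sSup_spectrum_smul_of_dotProduct_eq hA (hupper.antisymm hle))

lemma isHermitian_signlessLaplacian (G : SimpleGraph V) [DecidableRel G.Adj] :
    (signlessLaplacian G).IsHermitian :=
  (G.isHermitian_degMatrix ℝ).add (G.isHermitian_adjMatrix ℝ)

lemma qIndex_eq_sSup_spectrum (G : SimpleGraph V) [DecidableRel G.Adj] :
    qIndex G = sSup (spectrum ℝ (signlessLaplacian G)) :=
  congrArg sSup <| Set.ext fun μ ↦ (mem_spectrum_iff_exists_mulVec_eq_smul _ μ).symm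

lemma lt_qIndex_of_mul_dotProduct_le {G : SimpleGraph V} [DecidableRel G.Adj] {x : V → ℝ} {q : ℝ}
    (hle : q * (x ⬝ᵥ x) ≤ x ⬝ᵥ signlessLaplacian G *ᵥ x)
    (hne : signlessLaplacian G *ᵥ x ≠ q • x) : q < qIndex G :=
  qIndex_eq_sSup_spectrum G ▸
    lt_sSup_spectrum_of_mul_dotProduct_le (isHermitian_signlessLaplacian G) hle hne

end Rayleigh

section EdgeRotation

open SimpleGraph

variable {V : Type*} [Fintype V] [DecidableEq V]

lemma signlessLaplacian_mulVec_apply (G : SimpleGraph V) [DecidableRel G.Adj] (x : V → ℝ) (v : V) :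
    (signlessLaplacian G *ᵥ x) v = ∑ w ∈ G.neighborFinset v, (x v + x w) := by
  simp only [signlessLaplacian, add_mulVec, Pi.add_apply, mulVec_diagonal,
    adjMatrix_mulVec_apply, sum_add_distrib, sum_const, card_neighborFinset_eq_degree,
    nsmul_eq_mul]

lemma signlessLaplacian_sup_mulVec_of_disjoint {G H : SimpleGraph V} [DecidableRel G.Adj]
    [DecidableRel H.Adj] (hGH : Disjoint G H) (x : V → ℝ) :
    signlessLaplacian (G ⊔ H) *ᵥ x = signlessLaplacian G *ᵥ x + signlessLaplacian H *ᵥ x := by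
  ext v
  simp only [Pi.add_apply, signlessLaplacian_mulVec_apply, neighborFinset_sup_of_disjoint v hGH,
    sum_disjUnion]

lemma signlessLaplacian_edge_mulVec {a b : V} (hab : a ≠ b) (x : V → ℝ) :
    signlessLaplacian (edge a b) *ᵥ x = (x a + x b) • (Pi.single a 1 + Pi.single b 1) := by
  ext v
  rw [signlessLaplacian_mulVec_apply, neighborFinset_eq_filter, sum_filter]
  rcases eq_or_ne v a with rfl | hva
  · have hadj (w : V) : (edge v b).Adj v w ↔ w = b := by grind
    simp [hadj, hab]
  rcases eq_or_ne v b with rfl | hvb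
  · have hadj (w : V) : (edge a v).Adj v w ↔ w = a := by grind
    simp [hadj, hva, add_comm]
  · have hadj (w : V) : ¬ (edge a b).Adj v w := by grind
    simp [hadj, hva, hvb]

lemma signlessLaplacian_sup_edge_mulVec (H : SimpleGraph V) [DecidableRel H.Adj] {a b : V}
    (hab : a ≠ b) (hH : ¬ H.Adj a b) (x : V → ℝ) :
    signlessLaplacian (H ⊔ edge a b) *ᵥ x =
      signlessLaplacian H *ᵥ x + (x a + x b) • (Pi.single a 1 + Pi.single b 1) := by
  rw [signlessLaplacian_sup_mulVec_of_disjoint ((disjoint_edge H).2 hH),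
    signlessLaplacian_edge_mulVec hab]

lemma dotProduct_signlessLaplacian_sup_edge_mulVec (H : SimpleGraph V) [DecidableRel H.Adj]
    {a b : V} (hab : a ≠ b) (hH : ¬ H.Adj a b) (x : V → ℝ) :
    x ⬝ᵥ signlessLaplacian (H ⊔ edge a b) *ᵥ x =
      x ⬝ᵥ signlessLaplacian H *ᵥ x + (x a + x b) ^ 2 := by
  simp only [signlessLaplacian_sup_edge_mulVec H hab hH, dotProduct_add, dotProduct_smul,
    dotProduct_single_one, smul_eq_mul, sq]

lemma lt_qIndex_sup_edge_of_rotation {H : SimpleGraph V} [DecidableRel H.Adj] {i j w : V}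
    (hij : i ≠ j) (hiw : i ≠ w) (hjw : j ≠ w) (hHi : ¬ H.Adj i w) (hHj : ¬ H.Adj j w)
    {x : V → ℝ} {q : ℝ} (heig : signlessLaplacian (H ⊔ edge i w) *ᵥ x = q • x)
    (hx : |x i + x w| ≤ |x j + x w|) (hne : x j + x w ≠ 0) :
    q < qIndex (H ⊔ edge j w) := by
  apply lt_qIndex_of_mul_dotProduct_le (x := x)
  · calc q * (x ⬝ᵥ x) = x ⬝ᵥ signlessLaplacian (H ⊔ edge i w) *ᵥ x := by
          rw [heig, dotProduct_smul, smul_eq_mul]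
      _ = x ⬝ᵥ signlessLaplacian H *ᵥ x + (x i + x w) ^ 2 :=
          dotProduct_signlessLaplacian_sup_edge_mulVec H hiw hHi x
      _ ≤ x ⬝ᵥ signlessLaplacian H *ᵥ x + (x j + x w) ^ 2 := by grw [sq_le_sq.2 hx]
      _ = x ⬝ᵥ signlessLaplacian (H ⊔ edge j w) *ᵥ x :=
          (dotProduct_signlessLaplacian_sup_edge_mulVec H hjw hHj x).symm
  · rw [← heig, signlessLaplacian_sup_edge_mulVec H hiw hHi,
      signlessLaplacian_sup_edge_mulVec H hjw hHj]
    intro h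
    apply hne
    simpa [hij.symm, hjw] using congrFun h j

lemma deleteEdges_insert_sup_edge {V : Type*} {B : SimpleGraph V} {s : Set (Sym2 V)} {a b : V}
    (hB : B.Adj a b) (hs : s(a, b) ∉ s) :
    B.deleteEdges (insert s(a, b) s) ⊔ edge a b = B.deleteEdges s := by
  have hab := hB.ne
  ext u v
  grind [deleteEdges_adj, adj_comm]

lemma lt_qIndex_deleteEdges_of_exchange {B : SimpleGraph V} {E : Finset (Sym2 V)} {i j w : V}
    [DecidableRel (B.deleteEdges E).Adj]
    [DecidableRel (B.deleteEdges ↑(insert s(i, w) (E.erase s(j, w)))).Adj]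
    (hBi : B.Adj i w) (hBj : B.Adj j w) (hEi : s(i, w) ∉ E) (hEj : s(j, w) ∈ E)
    {x : V → ℝ} {q : ℝ} (heig : signlessLaplacian (B.deleteEdges E) *ᵥ x = q • x)
    (hx : |x i + x w| ≤ |x j + x w|) (hne : x j + x w ≠ 0) :
    q < qIndex (B.deleteEdges ↑(insert s(i, w) (E.erase s(j, w)))) := by
  classical
  have hij : i ≠ j := by rintro rfl; exact hEi hEj
  have hne' : s(i, w) ≠ s(j, w) := fun h ↦ hEi (h ▸ hEj)
  set H := B.deleteEdges (insert s(i, w) (E : Set (Sym2 V))) with hH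
  have hE : H ⊔ edge i w = B.deleteEdges E := deleteEdges_insert_sup_edge hBi hEi
  have hE' : H ⊔ edge j w = B.deleteEdges ↑(insert s(i, w) (E.erase s(j, w))) := by
    rw [← deleteEdges_insert_sup_edge hBj (by simp [hne'.symm]), hH, ← coe_insert, ← coe_insert,
      Finset.insert_comm, insert_erase hEj]
  have hHi : ¬ H.Adj i w := by simp [hH]
  have hHj : ¬ H.Adj j w := by simp [hH, hEj]
  convert lt_qIndex_sup_edge_of_rotation hij hBi.ne hBj.ne hHi hHj (by convert heig) hx hne
  exact hE'.symm

end EdgeRotation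

lemma adj_of_neighborFinset_subset_of_degree_eq {V : Type*} {G : SimpleGraph V} {v w : V}
    [Fintype (G.neighborSet v)] {s : Finset V} (hs : G.neighborFinset v ⊆ s)
    (hv : v ∈ s) (hdeg : G.degree v = #s - 1) (hw : w ∈ s) (hvw : v ≠ w) : G.Adj v w := by
  classical
  have herase : G.neighborFinset v = s.erase v := by
    refine eq_of_subset_of_card_le (subset_erase.2 ⟨hs, G.notMem_neighborFinset_self v⟩) ?_
    rw [card_erase_of_mem hv, G.card_neighborFinset_eq_degree, hdeg]
  rw [← G.mem_neighborFinset, herase]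
  exact mem_erase.2 ⟨hvw.symm, hw⟩

section Bgraph

variable {n k δ : ℕ} {i j w : Fin n} {E' : Finset (Sym2 (Fin n))}

lemma isE1Edge_mk_iff :
    IsE1Edge n k δ s(i, j) ↔ i ≠ j ∧ (i : ℕ) < n - (δ + k) ∧ (j : ℕ) < n - (δ + k) := by
  simp only [IsE1Edge, SimpleGraph.mem_edgeSet, Bgraph, Sym2.forall_mem_pair]
  tauto

lemma lt_of_Bgraph_adj (hδi : δ ≤ (i : ℕ)) (hi : (i : ℕ) < n - (δ + k))
    (hadj : (Bgraph n k δ).Adj i w) : (w : ℕ) < n - (δ + k) := by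
  obtain ⟨-, h⟩ := hadj
  omega

lemma adj_of_le_Bgraph_of_degree_eq {G : SimpleGraph (Fin n)} [DecidableRel G.Adj]
    (hG : G ≤ Bgraph n k δ) (hδi : δ ≤ (i : ℕ)) (hi : (i : ℕ) < n - (δ + k))
    (hdeg : G.degree i = n - δ - k - 1) (hw : (w : ℕ) < n - (δ + k)) (hiw : i ≠ w) :
    G.Adj i w := by
  let YZ : Finset (Fin n) := {v | (v : ℕ) < n - (δ + k)}
  have hcard : #YZ = n - (δ + k) := by
    rw [Fin.card_filter_val_lt, min_eq_right (Nat.sub_le _ _)]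
  refine adj_of_neighborFinset_subset_of_degree_eq (s := YZ) (fun v hv ↦ ?_)
    (by simpa [YZ] using hi) (by omega) (by simpa [YZ] using hw) hiw
  simpa [YZ] using lt_of_Bgraph_adj hδi hi (hG ((G.mem_neighborFinset i v).1 hv))

lemma exists_mk_mem_of_degree_deleteEdges_lt
    [DecidableRel ((Bgraph n k δ).deleteEdges (E' : Set (Sym2 (Fin n)))).Adj]
    (hj : (j : ℕ) < δ) (hdeg : ((Bgraph n k δ).deleteEdges E').degree j < n - 1) :
    ∃ w, s(j, w) ∈ E' := by
  have hnot : ¬ ((Bgraph n k δ).deleteEdges (E' : Set (Sym2 (Fin n)))).IsUniversal j := by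
    rwa [← SimpleGraph.degree_lt_card_sub_one, Fintype.card_fin]
  simp only [SimpleGraph.IsUniversal, not_forall, SimpleGraph.deleteEdges_adj] at hnot
  obtain ⟨w, hjw, hnadj⟩ := hnot
  exact ⟨w, by_contra fun hw ↦ hnadj ⟨⟨hjw, Or.inl hj⟩, hw⟩⟩

lemma exists_mk_mem_and_mk_notMem
    [DecidableRel ((Bgraph n k δ).deleteEdges (E' : Set (Sym2 (Fin n)))).Adj]
    (hE : ∀ e ∈ E', IsE1Edge n k δ e) (hδi : δ ≤ (i : ℕ)) (hi : (i : ℕ) < n - (δ + k))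
    (hdegi : ((Bgraph n k δ).deleteEdges E').degree i = n - δ - k - 1) (hj : (j : ℕ) < δ)
    (hdegj : ((Bgraph n k δ).deleteEdges E').degree j ≤ n - 2) :
    ∃ w, s(j, w) ∈ E' ∧ s(i, w) ∉ E' ∧ IsE1Edge n k δ s(i, w) := by
  have hij : i ≠ j := by rintro rfl; omega
  have hnotMem {v : Fin n} (hv : (v : ℕ) < n - (δ + k)) (hiv : i ≠ v) : s(i, v) ∉ E' :=
    (SimpleGraph.deleteEdges_adj.1 <| adj_of_le_Bgraph_of_degree_eq
      (SimpleGraph.deleteEdges_le _) hδi hi hdegi hv hiv).2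
  obtain ⟨w, hjwE⟩ := exists_mk_mem_of_degree_deleteEdges_lt hj (hdegj.trans_lt (by omega))
  obtain ⟨-, hjYZ, hw⟩ := isE1Edge_mk_iff.1 (hE _ hjwE)
  have hiw : i ≠ w := by
    rintro rfl
    exact hnotMem hjYZ hij (Sym2.eq_swap ▸ hjwE)
  exact ⟨w, hjwE, hnotMem hw hiw, isE1Edge_mk_iff.2 ⟨hiw, hi, hw⟩⟩

end Bgraph

theorem eigenvector_Z1_gt_Y2_general (k δ n : ℕ)
    (E' : Finset (Sym2 (Fin n))) (hE : ∀ e ∈ E', IsE1Edge n k δ e)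
    (G : SimpleGraph (Fin n)) [DecidableRel G.Adj]
    (hG : G = (Bgraph n k δ).deleteEdges ↑E')
    (hmax : ∀ E'' : Finset (Sym2 (Fin n)), (∀ e ∈ E'', IsE1Edge n k δ e) →
        #E'' = #E' → qIndex ((Bgraph n k δ).deleteEdges ↑E'') ≤ qIndex G)
    (h : Fin n → ℝ) (hpos : ∀ v, 0 < h v)
    (heig : signlessLaplacian G *ᵥ h = qIndex G • h) (i j : Fin n)
    (hδi : δ ≤ (i : ℕ)) (hi : (i : ℕ) < n - (δ + k)) (hdegi : G.degree i = n - δ - k - 1)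
    (hj : (j : ℕ) < δ) (hdegj : G.degree j ≤ n - 2) :
    h j < h i := by
  by_contra! hle
  subst hG
  obtain ⟨w, hjwE, hiwE, hiw⟩ := exists_mk_mem_and_mk_notMem hE hδi hi hdegi hj hdegj
  refine (hmax (insert s(i, w) (E'.erase s(j, w))) ?_ ?_).not_gt ?_
  · exact (forall_mem_insert _ _ _).2 ⟨hiw, fun e he ↦ hE e (mem_of_mem_erase he)⟩
  · rw [card_insert_of_notMem (mt mem_of_mem_erase hiwE), card_erase_add_one hjwE]
  · have hiw_pos : 0 < h i + h w := add_pos (hpos i) (hpos w)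
    have hjw_pos : 0 < h j + h w := add_pos (hpos j) (hpos w)
    refine lt_qIndex_deleteEdges_of_exchange hiw.1 (hE _ hjwE).1 hiwE hjwE heig ?_ hjw_pos.ne'
    rw [abs_of_pos hiw_pos, abs_of_pos hjw_pos]
    gcongr

/-- **Lemma 3.5 (1)**: let `G ∈ 𝓑₂(n,k,δ)` have the largest Q-index in the family and,
subject to that, the largest number of edges in `G[Y]`, and let `h` be a positive
`q(G)`-eigenvector with maximum entry `1`.  If `Y₂ ≠ ∅`, then `h i > h j` for all
`i ∈ Z₁` and `j ∈ Y₂`. -/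
theorem eigenvector_Z1_gt_Y2 (k δ n : ℕ) (hk : 1 ≤ k) (hδ : 2 ≤ δ)
    (hn : (δ ^ 2 + k * δ + 7 * δ + 6 * k + 9) * (δ ^ 2 + k * δ + 1) ≤ n)
    (E' : Finset (Sym2 (Fin n))) (hE : ∀ e ∈ E', IsE1Edge n k δ e)
    (hcard : E'.card = δ * (δ + k) / 4 + 1)
    (G : SimpleGraph (Fin n)) [DecidableRel G.Adj]
    (hG : G = (Bgraph n k δ).deleteEdges ↑E')
    (hmax : ∀ E'' : Finset (Sym2 (Fin n)), (∀ e ∈ E'', IsE1Edge n k δ e) →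
        E''.card = δ * (δ + k) / 4 + 1 →
        qIndex ((Bgraph n k δ).deleteEdges ↑E'') ≤ qIndex G)
    (hmaxY : ∀ E'' : Finset (Sym2 (Fin n)), (∀ e ∈ E'', IsE1Edge n k δ e) →
        E''.card = δ * (δ + k) / 4 + 1 →
        qIndex ((Bgraph n k δ).deleteEdges ↑E'') = qIndex G →
        inducedYEdges n δ ((Bgraph n k δ).deleteEdges ↑E'') ≤ inducedYEdges n δ G)
    (h : Fin n → ℝ) (hpos : ∀ v, 0 < h v)
    (heig : signlessLaplacian G *ᵥ h = qIndex G • h)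
    (hnorm : (∀ v, h v ≤ 1) ∧ ∃ v, h v = 1)
    (hY2 : ∃ j : Fin n, (j : ℕ) < δ ∧ G.degree j ≤ n - 2) :
    ∀ i j : Fin n,
      δ ≤ (i : ℕ) → (i : ℕ) < n - (δ + k) → G.degree i = n - δ - k - 1 →
      (j : ℕ) < δ → G.degree j ≤ n - 2 →
      h j < h i := by
  exact eigenvector_Z1_gt_Y2_general k δ n E' hE G hG
    (fun E'' hE'' hcard'' ↦ hmax E'' hE'' (hcard''.trans hcard)) h hpos heig
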